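/- arXiv:2211.06730 — 9 statements merged into one kernel-verified Lean document; each statement's English description precedes it below -/
import Mathlib

section
/- For every L > 0 and every ε > 0 there exists δ > 0 with the following property: if y and z lie in the closed ball of radius L centered at the origin of Euclidean 3-space and |dist(y, q) − dist(z, q)| ≤ δ for each of the six points q = L•e_j and q = −L•e_j (j ∈ {1,2,3}, e_j the standard basis vectors), then dist(y, z) ≤ ε. -/
/-- Polarization: control of the distances to `q` and `-q` controls the inner product with `q`. -/
lemma abs_inner_sub_le_of_abs_dist_sub_le {E : Type*} [NormedAddCommGroup E]
    [InnerProductSpace ℝ E] {y z q : E} {r δ : ℝ} (hy : ‖y‖ ≤ r) (hz : ‖z‖ ≤ r) (hq : ‖q‖ ≤ r)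
    (h₁ : |dist y q - dist z q| ≤ δ) (h₂ : |dist y (-q) - dist z (-q)| ≤ δ) :
    |inner ℝ (y - z) q| ≤ 2 * r * δ := by
  simp only [dist_eq_norm, sub_neg_eq_add] at h₁ h₂
  have abs_sq_sub_le {a b : ℝ} (ha : 0 ≤ a) (hb : 0 ≤ b) (ha' : a ≤ 2 * r) (hb' : b ≤ 2 * r)
      (hab : |a - b| ≤ δ) : |a ^ 2 - b ^ 2| ≤ 4 * r * δ := by
    rw [sq_sub_sq, abs_mul, abs_of_nonneg (add_nonneg ha hb)]
    exact mul_le_mul (by linarith) hab (abs_nonneg _) (by linarith)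
  have hsub := abs_sq_sub_le (norm_nonneg (y - q)) (norm_nonneg (z - q))
    (by linarith [norm_sub_le y q]) (by linarith [norm_sub_le z q]) h₁
  have hadd := abs_sq_sub_le (norm_nonneg (y + q)) (norm_nonneg (z + q))
    (by linarith [norm_add_le y q]) (by linarith [norm_add_le z q]) h₂
  rw [norm_sub_sq_real, norm_sub_sq_real, abs_le] at hsub
  rw [norm_add_sq_real, norm_add_sq_real, abs_le] at hadd
  rw [inner_sub_left, abs_le]
  constructor <;> linarith [hsub.1, hsub.2, hadd.1, hadd.2]

theorem modulus_of_continuity_distances_to_axis_points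
    (L : ℝ) (hL : 0 < L) (ε : ℝ) (hε : 0 < ε) :
    ∃ δ : ℝ, 0 < δ ∧
      ∀ y z : EuclideanSpace ℝ (Fin 3),
        y ∈ Metric.closedBall (0 : EuclideanSpace ℝ (Fin 3)) L →
        z ∈ Metric.closedBall (0 : EuclideanSpace ℝ (Fin 3)) L →
        (∀ j : Fin 3,
          |dist y (L • EuclideanSpace.single j (1 : ℝ)) -
            dist z (L • EuclideanSpace.single j (1 : ℝ))| ≤ δ ∧
          |dist y (-(L • EuclideanSpace.single j (1 : ℝ))) -
            dist z (-(L • EuclideanSpace.single j (1 : ℝ)))| ≤ δ) →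
        dist y z ≤ ε := by
  refine ⟨ε / 6, by positivity, fun y z hy hz h => ?_⟩
  rw [mem_closedBall_zero_iff] at hy hz
  have hcoord (j : Fin 3) : |y j - z j| ≤ ε / 3 := by
    have hinner := abs_inner_sub_le_of_abs_dist_sub_le hy hz
      (by simp [norm_smul, abs_of_pos hL]) (h j).1 (h j).2
    rw [inner_smul_right, EuclideanSpace.inner_single_right, abs_mul, abs_of_pos hL] at hinner
    simp only [one_mul, PiLp.sub_apply, conj_trivial] at hinner
    exact le_of_mul_le_mul_left (by linarith) hL
  rw [EuclideanSpace.dist_eq]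
  refine Real.sqrt_le_iff.mpr ⟨hε.le, ?_⟩
  have hsq (j : Fin 3) : dist (y j) (z j) ^ 2 ≤ (ε / 3) ^ 2 :=
    pow_le_pow_left₀ dist_nonneg (hcoord j) 2
  rw [Fin.sum_univ_three]
  nlinarith [hsq 0, hsq 1, hsq 2]
end

section
/- Let (X_i)_{i∈ℕ} be nonempty compact metric spaces and X a nonempty compact metric space such that the Gromov–Hausdorff distance from X_i to X tends to 0 as i → ∞. For each i let Ω_i be a nonempty compact subset of X_i, equipped with the metric restricted from X_i. Then there exist a strictly increasing function φ : ℕ → ℕ and a nonempty compact subset Ω of X (with the restricted metric) such that the Gromov–Hausdorff distance from Ω_{φ(i)} to Ω tends to 0 as i → ∞. -/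
open GromovHausdorff Metric TopologicalSpace in
/-- A nonempty compact subset of `X` is `r`-close to a nonempty compact subset of `Y`
whenever `X` and `Y` are at Gromov–Hausdorff distance less than `r`. -/
theorem exists_nonemptyCompacts_dist_toGHSpace_le {X Y : Type}
    [MetricSpace X] [CompactSpace X] [Nonempty X] [MetricSpace Y] [CompactSpace Y] [Nonempty Y]
    {r : ℝ} (hr : ghDist X Y < r) (K : NonemptyCompacts X) :
    ∃ L : NonemptyCompacts Y, dist K.toGHSpace L.toGHSpace ≤ r := by
  obtain ⟨Φ, Ψ, hΦ, hΨ, h⟩ := ghDist_eq_hausdorffDist X Y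
  rw [h] at hr
  have hfin : hausdorffEDist (Set.range Φ) (Set.range Ψ) ≠ ⊤ :=
    hausdorffEDist_ne_top_of_nonempty_of_bounded (Set.range_nonempty _) (Set.range_nonempty _)
      (isCompact_range hΦ.continuous).isBounded (isCompact_range hΨ.continuous).isBounded
  have hclose (x : X) : ∃ y, dist (Φ x) (Ψ y) < r := by
    obtain ⟨_, ⟨y, rfl⟩, hy⟩ :=
      exists_dist_lt_of_hausdorffDist_lt (Set.mem_range_self x) hr hfin
    exact ⟨y, hy⟩
  have hr0 : 0 ≤ r := hausdorffDist_nonneg.trans hr.le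
  have hKc : IsCompact (Φ '' K) := K.isCompact.image hΦ.continuous
  have hKne : (Φ '' (K : Set X)).Nonempty := K.nonempty.image Φ
  let S : Set Y := {y | infDist (Ψ y) (Φ '' K) ≤ r}
  have hmem {x : X} (hx : x ∈ K) {y : Y} (hy : dist (Φ x) (Ψ y) < r) : y ∈ S :=
    (infDist_le_dist_of_mem (Set.mem_image_of_mem Φ hx)).trans
      (by rw [dist_comm]; exact hy.le)
  have hSc : IsCompact S :=
    (isClosed_le ((continuous_infDist_pt _).comp hΨ.continuous) continuous_const).isCompact
  have hSne : S.Nonempty := by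
    obtain ⟨x, hx⟩ := K.nonempty
    obtain ⟨y, hy⟩ := hclose x
    exact ⟨y, hmem hx hy⟩
  let L : NonemptyCompacts Y := ⟨⟨S, hSc⟩, hSne⟩
  have hΦK : Isometry fun x : K => Φ x := hΦ.comp isometry_subtype_coe
  have hΨL : Isometry fun y : L => Ψ y := hΨ.comp isometry_subtype_coe
  refine ⟨L, (ghDist_le_hausdorffDist hΦK hΨL).trans (hausdorffDist_le_of_mem_dist hr0 ?_ ?_)⟩
  · rintro _ ⟨⟨x, hx⟩, rfl⟩
    obtain ⟨y, hy⟩ := hclose x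
    exact ⟨Ψ y, ⟨⟨y, hmem hx hy⟩, rfl⟩, hy.le⟩
  · rintro _ ⟨⟨y, hy⟩, rfl⟩
    obtain ⟨_, ⟨x, hx, rfl⟩, hxy⟩ := hKc.exists_infDist_eq_dist hKne (Ψ y)
    exact ⟨Φ x, ⟨⟨x, hx⟩, rfl⟩, hxy ▸ hy⟩

open GromovHausdorff in
theorem compact_subsets_subconverge_under_GH_convergence
    (X : ℕ → Type) [∀ i, MetricSpace (X i)] [∀ i, CompactSpace (X i)] [∀ i, Nonempty (X i)]
    (Y : Type) [MetricSpace Y] [CompactSpace Y] [Nonempty Y]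
    (hconv : Filter.Tendsto (fun i => ghDist (X i) Y) Filter.atTop (nhds 0))
    (Ω : ∀ i, Set (X i)) (hne : ∀ i, (Ω i).Nonempty) (hcpt : ∀ i, IsCompact (Ω i)) :
    ∃ φ : ℕ → ℕ, StrictMono φ ∧
      ∃ (Z : Set Y) (hZne : Z.Nonempty) (hZc : IsCompact Z),
        Filter.Tendsto
          (fun i =>
            @ghDist (Ω (φ i)) Z _ (Set.Nonempty.to_subtype (hne (φ i)))
              (isCompact_iff_compactSpace.mp (hcpt (φ i))) _
              (Set.Nonempty.to_subtype hZne)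
              (isCompact_iff_compactSpace.mp hZc))
          Filter.atTop (nhds 0) := by
  let K (i : ℕ) : TopologicalSpace.NonemptyCompacts (X i) := ⟨⟨Ω i, hcpt i⟩, hne i⟩
  have hpos (i : ℕ) : ghDist (X i) Y < ghDist (X i) Y + 1 / ((i : ℝ) + 1) :=
    lt_add_of_pos_right _ Nat.one_div_pos_of_nat
  choose L hL using fun i => exists_nonemptyCompacts_dist_toGHSpace_le (hpos i) (K i)
  obtain ⟨Z, φ, hφ, hZ⟩ := CompactSpace.tendsto_subseq L
  refine ⟨φ, hφ, Z, Z.nonempty, Z.isCompact, ?_⟩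
  have hKL : Filter.Tendsto (fun i => dist (K i).toGHSpace (L i).toGHSpace)
      Filter.atTop (nhds 0) :=
    squeeze_zero (fun _ => dist_nonneg) hL
      (by simpa using hconv.add tendsto_one_div_add_atTop_nhds_zero_nat)
  have hLZ : Filter.Tendsto (fun i => dist (L (φ i)).toGHSpace Z.toGHSpace)
      Filter.atTop (nhds 0) :=
    tendsto_iff_dist_tendsto_zero.1 ((toGHSpace_continuous.tendsto Z).comp hZ)
  have hsum := (hKL.comp hφ.tendsto_atTop).add hLZ
  rw [add_zero] at hsum
  exact squeeze_zero (fun _ => dist_nonneg)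
    (fun i => dist_triangle (K (φ i)).toGHSpace (L (φ i)).toGHSpace Z.toGHSpace) hsum
end

section
/- Let X and Y be topological spaces and let f : X → Y be a local homeomorphism which is also a closed map. Then the set { y ∈ Y : there exists a unique x ∈ X with f(x) = y } is an open subset of Y. -/
theorem unique_preimage_set_isOpen_of_localHomeomorph_closedMap
    {X Y : Type*} [TopologicalSpace X] [TopologicalSpace Y] (f : X → Y)
    (hloc : IsLocalHomeomorph f) (hclosed : IsClosedMap f) :
    IsOpen {y : Y | ∃! x : X, f x = y} := by
  refine isOpen_iff_forall_mem_open.2 ?_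
  rintro _ ⟨x, rfl, hx⟩
  obtain ⟨e, hxe, rfl⟩ := hloc x
  refine ⟨e '' e.source \ e '' e.sourceᶜ, ?_,
    (hloc.isOpenMap _ e.open_source).sdiff (hclosed _ e.open_source.isClosed_compl),
    ⟨x, hxe, rfl⟩, ?_⟩
  · rintro _ ⟨⟨z, hz, rfl⟩, hout⟩
    refine ⟨z, rfl, fun w hw => e.injOn ?_ hz hw⟩
    by_contra hwe
    exact hout ⟨w, hwe, hw⟩
  · rintro ⟨w, hwe, hw⟩
    exact hwe (hx w hw ▸ hxe)
end

section
/- Let r > 0 and M ≥ 0. Let f : ℝ³ → ℝ³ (Euclidean 3-space to itself) be differentiable on the open set {x : ‖x‖ > r/2}, and assume that ‖Df(x) − Id‖ ≤ 1/2 in operator norm for every x with ‖x‖ ≥ r, and that ‖f(x)‖ ≤ M for every x with ‖x‖ = r. Then for every w ∈ ℝ³ with ‖w‖ ≥ 20(M + r + 1), the set {x : ‖x‖ ≥ r and f(x) = w} contains at most one point. -/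
section ExteriorEstimates

variable {E : Type*} [NormedAddCommGroup E] [NormedSpace ℝ E]

/-- Mean value inequality for a map whose derivative is close to the identity outside a ball,
along a segment that stays outside this ball. -/
theorem norm_sub_sub_le_of_segment_subset_exterior {f : E → E} {r : ℝ} (hr : 0 < r)
    (hdiff : DifferentiableOn ℝ f {x : E | r / 2 < ‖x‖})
    (hder : ∀ x : E, r ≤ ‖x‖ → ‖fderiv ℝ f x - ContinuousLinearMap.id ℝ E‖ ≤ 1 / 2)
    {x y : E} (hseg : segment ℝ x y ⊆ {z : E | r ≤ ‖z‖}) :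
    ‖f y - f x - (y - x)‖ ≤ 1 / 2 * ‖y - x‖ := by
  have hopen : IsOpen {z : E | r / 2 < ‖z‖} := isOpen_lt continuous_const continuous_norm
  exact (convex_segment x y).norm_image_sub_le_of_norm_fderiv_le'
    (fun z hz => hdiff.differentiableAt
      (hopen.mem_nhds (show r / 2 < ‖z‖ from (half_lt_self hr).trans_le (hseg hz))))
    (fun z hz => hder z (hseg hz)) (left_mem_segment ℝ x y) (right_mem_segment ℝ x y)

/-- Radial integration from the sphere of radius `r` bounds the displacement `f x - x`. -/
theorem norm_sub_self_le_of_exterior {f : E → E} {r M : ℝ} (hr : 0 < r)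
    (hdiff : DifferentiableOn ℝ f {x : E | r / 2 < ‖x‖})
    (hder : ∀ x : E, r ≤ ‖x‖ → ‖fderiv ℝ f x - ContinuousLinearMap.id ℝ E‖ ≤ 1 / 2)
    (hbd : ∀ x : E, ‖x‖ = r → ‖f x‖ ≤ M) {x : E} (hx : r ≤ ‖x‖) :
    ‖f x - x‖ ≤ M + r + (‖x‖ - r) / 2 := by
  have hx0 : 0 < ‖x‖ := hr.trans_le hx
  have hc : 0 < r / ‖x‖ := div_pos hr hx0
  have hc1 : r / ‖x‖ ≤ 1 := (div_le_one hx0).2 hx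
  have hcx : r / ‖x‖ * ‖x‖ = r := div_mul_cancel₀ r hx0.ne'
  set p : E := (r / ‖x‖) • x with hp
  have hpn : ‖p‖ = r := by rw [hp, norm_smul, Real.norm_of_nonneg hc.le, hcx]
  have hdist : ‖x - p‖ = ‖x‖ - r := by
    have hxp : x - p = (1 - r / ‖x‖) • x := by rw [hp, sub_smul, one_smul]
    rw [hxp, norm_smul, Real.norm_of_nonneg (sub_nonneg.2 hc1), sub_mul, one_mul, hcx]
  have hseg : segment ℝ p x ⊆ {z : E | r ≤ ‖z‖} := by
    rintro _ ⟨a, b, ha, hb, hab, rfl⟩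
    have hz : a • p + b • x = (a * (r / ‖x‖) + b) • x := by rw [hp, smul_smul, add_smul]
    have hz0 : 0 ≤ a * (r / ‖x‖) + b := by positivity
    rw [Set.mem_ofPred_eq, hz, norm_smul, Real.norm_of_nonneg hz0, add_mul, mul_assoc, hcx]
    nlinarith
  have hmvt := norm_sub_sub_le_of_segment_subset_exterior hr hdiff hder hseg
  have htri : ‖f x - x‖ ≤ ‖f x - f p - (x - p)‖ + (‖f p‖ + ‖p‖) := by
    calc ‖f x - x‖ = ‖(f x - f p - (x - p)) + (f p - p)‖ := by congr 1; abel
      _ ≤ _ := (norm_add_le _ _).trans (add_le_add_right (norm_sub_le _ _) _)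
  have := hbd p hpn
  linarith

/-- If the segment from `x` to `y` meets a ball centred at the origin, then `x` and `y` are
almost as far apart as the path through the origin. -/
theorem norm_add_norm_le_of_mem_segment {x y z : E} (hz : z ∈ segment ℝ x y) :
    ‖x‖ + ‖y‖ ≤ ‖x - y‖ + 2 * ‖z‖ := by
  have hdist := dist_add_dist_of_mem_segment hz
  rw [dist_eq_norm, dist_eq_norm, dist_eq_norm] at hdist
  have hx := norm_sub_norm_le x z
  have hy := norm_sub_norm_le y z
  rw [norm_sub_rev y z] at hy
  linarith

end ExteriorEstimates

theorem one_to_one_near_infinity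
    (r M : ℝ) (hr : 0 < r) (hM : 0 ≤ M)
    (f : EuclideanSpace ℝ (Fin 3) → EuclideanSpace ℝ (Fin 3))
    (hdiff : DifferentiableOn ℝ f {x : EuclideanSpace ℝ (Fin 3) | r / 2 < ‖x‖})
    (hder : ∀ x : EuclideanSpace ℝ (Fin 3), r ≤ ‖x‖ →
      ‖fderiv ℝ f x - ContinuousLinearMap.id ℝ (EuclideanSpace ℝ (Fin 3))‖ ≤ 1 / 2)
    (hbd : ∀ x : EuclideanSpace ℝ (Fin 3), ‖x‖ = r → ‖f x‖ ≤ M) :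
    ∀ w : EuclideanSpace ℝ (Fin 3), 20 * (M + r + 1) ≤ ‖w‖ →
      {x : EuclideanSpace ℝ (Fin 3) | r ≤ ‖x‖ ∧ f x = w}.Subsingleton := by
  rintro w hw x ⟨hx, hfx⟩ y ⟨hy, hfy⟩
  have hdx := norm_sub_self_le_of_exterior hr hdiff hder hbd hx
  have hdy := norm_sub_self_le_of_exterior hr hdiff hder hbd hy
  rw [hfx] at hdx
  rw [hfy] at hdy
  by_cases hseg : segment ℝ x y ⊆ {z | r ≤ ‖z‖}
  · have hmvt := norm_sub_sub_le_of_segment_subset_exterior hr hdiff hder hseg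
    rw [hfx, hfy, sub_self, zero_sub, norm_neg] at hmvt
    have hzero : ‖y - x‖ ≤ 0 := by linarith
    exact (sub_eq_zero.1 (norm_le_zero_iff.1 hzero)).symm
  · exfalso
    obtain ⟨z, hz, hzr⟩ := Set.not_subset.1 hseg
    have hzr : ‖z‖ < r := not_le.1 hzr
    have hfar := norm_add_norm_le_of_mem_segment hz
    have hnear : ‖x - y‖ ≤ ‖w - y‖ + ‖w - x‖ := by
      calc ‖x - y‖ = ‖(w - y) - (w - x)‖ := by congr 1; abel
        _ ≤ _ := norm_sub_le _ _
    have hwx := norm_sub_norm_le w x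
    have hwy := norm_sub_norm_le w y
    linarith
end

section
/- Let r > 0 and M ≥ 0. Let f : ℝ³ → ℝ³ (Euclidean 3-space to itself) be differentiable on the open set {x : ‖x‖ > r/2}, and assume that ‖Df(x) − Id‖ ≤ 1/2 in operator norm for every x with ‖x‖ ≥ r, and that ‖f(x)‖ ≤ M for every x with ‖x‖ = r. Then for every x with ‖x‖ ≥ r one has (1/2)(‖x‖ − r) − M ≤ ‖f(x)‖ ≤ M + (3/2)(‖x‖ − r). -/
theorem norm_growth_near_infinity
    (r M : ℝ) (hr : 0 < r) (hM : 0 ≤ M)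
    (f : EuclideanSpace ℝ (Fin 3) → EuclideanSpace ℝ (Fin 3))
    (hdiff : DifferentiableOn ℝ f {x : EuclideanSpace ℝ (Fin 3) | r / 2 < ‖x‖})
    (hder : ∀ x : EuclideanSpace ℝ (Fin 3), r ≤ ‖x‖ →
      ‖fderiv ℝ f x - ContinuousLinearMap.id ℝ (EuclideanSpace ℝ (Fin 3))‖ ≤ 1 / 2)
    (hbd : ∀ x : EuclideanSpace ℝ (Fin 3), ‖x‖ = r → ‖f x‖ ≤ M) :
    ∀ x : EuclideanSpace ℝ (Fin 3), r ≤ ‖x‖ →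
      (1 / 2) * (‖x‖ - r) - M ≤ ‖f x‖ ∧ ‖f x‖ ≤ M + (3 / 2) * (‖x‖ - r) := by
  intro x hx
  have hx0 : 0 < ‖x‖ := hr.trans_le hx
  set y : EuclideanSpace ℝ (Fin 3) := (r / ‖x‖) • x with hy
  have hynorm : ‖y‖ = r := by
    rw [hy, norm_smul, Real.norm_of_nonneg (by positivity), div_mul_cancel₀ _ hx0.ne']
  have hsub : ‖x - y‖ = ‖x‖ - r := by
    have hxy : x - y = (1 - r / ‖x‖) • x := by rw [hy, sub_smul, one_smul]
    have hle : r / ‖x‖ ≤ 1 := (div_le_one hx0).2 hx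
    rw [hxy, norm_smul, Real.norm_of_nonneg (sub_nonneg.2 hle), sub_mul, one_mul,
      div_mul_cancel₀ _ hx0.ne']
  let s : Set (EuclideanSpace ℝ (Fin 3)) := {z | r * ‖x‖ ≤ inner ℝ x z}
  -- The half-space `s` contains the radial segment from `y` to `x` and avoids `ball 0 r`.
  have hs : Convex ℝ s := convex_halfSpace_ge (innerSL ℝ x).isLinear _
  have hs_norm : ∀ z ∈ s, r ≤ ‖z‖ := fun z hz => by
    have hz' : r * ‖x‖ ≤ inner ℝ x z := hz
    have := real_inner_le_norm x z
    exact le_of_mul_le_mul_right (by linarith) hx0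
  have hxs : x ∈ s := by
    change r * ‖x‖ ≤ inner ℝ x x
    rw [real_inner_self_eq_norm_mul_norm]
    gcongr
  have hys : y ∈ s := by
    change r * ‖x‖ ≤ inner ℝ x y
    rw [hy, real_inner_smul_right, real_inner_self_eq_norm_mul_norm, ← mul_assoc,
      div_mul_cancel₀ _ hx0.ne']
  have hdiffAt : ∀ z ∈ s, DifferentiableAt ℝ f z := fun z hz =>
    hdiff.differentiableAt ((isOpen_lt continuous_const continuous_norm).mem_nhds
      ((half_lt_self hr).trans_le (hs_norm z hz)))
  have hmv := hs.norm_image_sub_le_of_norm_fderiv_le' hdiffAt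
    (fun z hz => hder z (hs_norm z hz)) hys hxs
  rw [ContinuousLinearMap.id_apply, hsub] at hmv
  have hfy := hbd y hynorm
  have hupper : ‖f x - f y‖ ≤ ‖f x - f y - (x - y)‖ + ‖x - y‖ := norm_le_norm_sub_add _ _
  have hlower : ‖x - y‖ ≤ ‖f x - f y‖ + ‖f x - f y - (x - y)‖ := norm_le_insert _ _
  have hfx_le : ‖f x‖ ≤ ‖f x - f y‖ + ‖f y‖ := norm_le_norm_sub_add _ _
  have hle_fx : ‖f x - f y‖ ≤ ‖f x‖ + ‖f y‖ := norm_sub_le _ _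
  constructor <;> linarith
end

section
/- Let C ≥ 1 be a real number and let a : ℕ → ℝ be a sequence with a_k ≥ 0 for all k, a_0 ≤ 1, and a_k ≤ C^(k/3^k) · a_{k−1}^(1 − 1/(2·3^{k−1})) for every k ≥ 1 (real exponentiation). Then a_k ≤ C · a_0^(5/24) for every k. -/
/-- One step of the iteration: a bound `y ≤ C ^ s * x ^ q` is propagated through
`z ≤ C ^ t * y ^ e`. -/
theorem le_rpow_mul_rpow_of_le_rpow_mul_rpow {C x y z s t q e s' q' : ℝ}
    (hC : 1 ≤ C) (hx : 0 ≤ x) (hx1 : x ≤ 1) (hy : 0 ≤ y) (he : 0 ≤ e)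
    (hyx : y ≤ C ^ s * x ^ q) (hzy : z ≤ C ^ t * y ^ e)
    (hs : t + s * e ≤ s') (hq : q' ≤ q * e) (hq' : 0 ≤ q') :
    z ≤ C ^ s' * x ^ q' := by
  have hC0 : 0 < C := by linarith
  calc z ≤ C ^ t * y ^ e := hzy
    _ ≤ C ^ t * (C ^ s * x ^ q) ^ e := by gcongr
    _ = C ^ (t + s * e) * x ^ (q * e) := by
      rw [Real.mul_rpow (by positivity) (by positivity), ← Real.rpow_mul hC0.le,
        ← Real.rpow_mul hx, Real.rpow_add hC0, mul_assoc]
    _ ≤ C ^ s' * x ^ q' :=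
      mul_le_mul (Real.rpow_le_rpow_of_exponent_le hC hs)
        (Real.rpow_le_rpow_of_exponent_ge' hx hx1 hq' hq)
        (by positivity) (by positivity)

theorem moser_iteration_arithmetic
    (C : ℝ) (hC : 1 ≤ C) (a : ℕ → ℝ)
    (ha : ∀ k, 0 ≤ a k) (ha0 : a 0 ≤ 1)
    (hrec : ∀ k : ℕ, 1 ≤ k →
      a k ≤ C ^ ((k : ℝ) / 3 ^ k) * a (k - 1) ^ (1 - 1 / (2 * 3 ^ (k - 1)) : ℝ)) :
    ∀ k, a k ≤ C * a 0 ^ ((5 : ℝ) / 24) := by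
  -- `3/4 - (2k+3)/(4·3^k)` is the partial sum of `j/3^j`, and `5/24 + (5/8)/3^k` is a lower
  -- bound for the partial product of `1 - 1/(2·3^j)`.
  have key : ∀ k : ℕ, a k ≤ C ^ (3 / 4 - (2 * k + 3) / (4 * 3 ^ k) : ℝ) *
      a 0 ^ (5 / 24 + 5 / 8 / 3 ^ k : ℝ) := by
    intro k
    induction k with
    | zero =>
      norm_num
      simpa using Real.rpow_le_rpow_of_exponent_ge' (ha 0) ha0
        (by norm_num : (0 : ℝ) ≤ 5 / 6) (by norm_num : (5 / 6 : ℝ) ≤ 1)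
    | succ k ih =>
      have hpow : (1 : ℝ) ≤ 3 ^ k := one_le_pow₀ (by norm_num)
      have hbern : 1 + (k : ℝ) * 2 ≤ 3 ^ k := by
        have := one_add_mul_le_pow (by norm_num : (-2 : ℝ) ≤ 2) k
        norm_num at this ⊢
        exact this
      have hstep := hrec (k + 1) (by omega)
      rw [Nat.add_sub_cancel] at hstep
      refine le_rpow_mul_rpow_of_le_rpow_mul_rpow hC (ha 0) ha0 (ha k) ?_ ih hstep ?_ ?_
        (by positivity)
      · rw [sub_nonneg, div_le_one (by positivity)]
        linarith
      · have hsum : (0 : ℝ) ≤ 3 / 4 - (2 * k + 3) / (4 * 3 ^ k) := by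
          rw [sub_nonneg, div_le_div_iff₀ (by positivity) (by norm_num)]
          linarith
        have hdrop := mul_nonneg hsum (by positivity : (0 : ℝ) ≤ 1 / (2 * 3 ^ k))
        have htel : ((k + 1 : ℕ) : ℝ) / 3 ^ (k + 1) + (3 / 4 - (2 * k + 3) / (4 * 3 ^ k)) =
            3 / 4 - (2 * (k + 1 : ℕ) + 3) / (4 * 3 ^ (k + 1)) := by
          push_cast
          field_simp
          ring
        linarith
      · have hinv : ((3 : ℝ) ^ k)⁻¹ ≤ 1 := inv_le_one_of_one_le₀ hpow
        have hinv0 : (0 : ℝ) ≤ (3 ^ k)⁻¹ := by positivity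
        have hdiff : (5 / 24 + 5 / 8 / 3 ^ k) * (1 - 1 / (2 * 3 ^ k)) -
            (5 / 24 + 5 / 8 / 3 ^ (k + 1)) =
            5 / 16 * ((3 : ℝ) ^ k)⁻¹ * (1 - (3 ^ k)⁻¹) := by
          field_simp
          ring
        have := mul_nonneg (mul_nonneg (by norm_num : (0 : ℝ) ≤ 5 / 16) hinv0)
          (sub_nonneg.2 hinv)
        linarith
  intro k
  refine (key k).trans (mul_le_mul ?_ ?_ (Real.rpow_nonneg (ha 0) _) (by linarith))
  · have : (0 : ℝ) ≤ (2 * k + 3) / (4 * 3 ^ k) := by positivity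
    simpa using Real.rpow_le_rpow_of_exponent_le hC
      (by linarith : (3 / 4 - (2 * k + 3) / (4 * 3 ^ k) : ℝ) ≤ 1)
  · have : (0 : ℝ) ≤ 5 / 8 / 3 ^ k := by positivity
    exact Real.rpow_le_rpow_of_exponent_ge' (ha 0) ha0 (by norm_num) (by linarith)
end

section
/- Let X be a metric space, let 0 < L₀ ≤ L be real numbers, and let f : X → ℝ³ be a map into Euclidean 3-space with ‖f(x)‖ ≤ L for every x ∈ X. Let Q ⊆ X be a subset such that: (i) every w ∈ ℝ³ with L₀ ≤ ‖w‖ ≤ L is of the form f(p) for some p ∈ Q; and (ii) dist(x, p) = ‖f(x) − f(p)‖ for every x ∈ X and every p ∈ Q. Then f is 1-Lipschitz: ‖f(x) − f(y)‖ ≤ dist(x, y) for all x, y ∈ X. -/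
/-- A ray starting in a closed ball centred at the origin meets the bounding sphere. -/
theorem exists_nonneg_norm_add_smul_eq {E : Type*} [NormedAddCommGroup E] [NormedSpace ℝ E]
    {b v : E} {r : ℝ} (hb : ‖b‖ ≤ r) (hv : v ≠ 0) : ∃ t : ℝ, 0 ≤ t ∧ ‖b + t • v‖ = r := by
  have hv' : 0 < ‖v‖ := norm_pos_iff.mpr hv
  have hr : 0 ≤ r := (norm_nonneg b).trans hb
  have hT : 0 ≤ 2 * r / ‖v‖ := by positivity
  have hfar : r ≤ ‖b + (2 * r / ‖v‖) • v‖ := by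
    have hnorm : ‖(2 * r / ‖v‖) • v‖ = 2 * r := by
      rw [norm_smul, Real.norm_of_nonneg hT, div_mul_cancel₀ _ hv'.ne']
    have htri := norm_sub_le (b + (2 * r / ‖v‖) • v) b
    rw [add_sub_cancel_left, hnorm] at htri
    linarith
  have hcont : ContinuousOn (fun t : ℝ => ‖b + t • v‖) (Set.Icc 0 (2 * r / ‖v‖)) := by
    fun_prop
  obtain ⟨t, ht, htr⟩ := intermediate_value_Icc hT hcont ⟨by simpa using hb, hfar⟩
  exact ⟨t, ht.1, htr⟩

theorem one_lipschitz_of_exact_distances_to_annulus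
    {X : Type*} [MetricSpace X] (L₀ L : ℝ) (hL₀ : 0 < L₀) (hL : L₀ ≤ L)
    (f : X → EuclideanSpace ℝ (Fin 3)) (hfbd : ∀ x, ‖f x‖ ≤ L)
    (Q : Set X)
    (hsurj : ∀ w : EuclideanSpace ℝ (Fin 3), L₀ ≤ ‖w‖ → ‖w‖ ≤ L → ∃ p ∈ Q, f p = w)
    (hdist : ∀ x : X, ∀ p ∈ Q, dist x p = ‖f x - f p‖) :
    ∀ x y : X, ‖f x - f y‖ ≤ dist x y := by
  intro x y
  rcases eq_or_ne (f x) (f y) with hxy | hxy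
  · simp [hxy]
  obtain ⟨t, ht, hnorm⟩ := exists_nonneg_norm_add_smul_eq (hfbd y) (sub_ne_zero.mpr hxy.symm)
  obtain ⟨p, hpQ, hp⟩ := hsurj _ (hL.trans hnorm.ge) hnorm.le
  have hxp : dist x p = (1 + t) * ‖f x - f y‖ := by
    rw [hdist x p hpQ, hp,
      show f x - (f y + t • (f y - f x)) = (1 + t) • (f x - f y) by module,
      norm_smul, Real.norm_of_nonneg (by positivity)]
  have hyp : dist y p = t * ‖f x - f y‖ := by
    rw [hdist y p hpQ, hp,
      show f y - (f y + t • (f y - f x)) = t • (f x - f y) by module,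
      norm_smul, Real.norm_of_nonneg ht]
  linarith [dist_triangle x y p]
end

section
/- For all real numbers D > 0 and δ > 0 there exists a constant C > 0 such that: for every subset Σ of ℝ³ (Euclidean 3-space) and every point x ∈ ℝ³ whose distance to Σ is at least δ (infDist(x, Σ) ≥ δ), the Lebesgue (outer) measure of the set { z ∈ closedBall(x, D) : the segment [x, z] meets Σ } is at most C times the 2-dimensional Hausdorff measure of Σ ∩ closedBall(x, D). -/
open MeasureTheory

section Cone

variable {E : Type*} [NormedAddCommGroup E] [NormedSpace ℝ E]

/-- The union of the homothetic copies of `A` with centre `x` and ratio in `[0, R]`. -/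
def coneOver (x : E) (R : ℝ) (A : Set E) : Set E :=
  (fun p : ℝ × E => x + p.1 • (p.2 - x)) '' (Set.Icc 0 R ×ˢ A)

theorem coneOver_mono (x : E) (R : ℝ) {A B : Set E} (h : A ⊆ B) :
    coneOver x R A ⊆ coneOver x R B :=
  Set.image_mono (Set.prod_mono_right h)

theorem coneOver_iUnion {ι : Type*} (x : E) (R : ℝ) (A : ι → Set E) :
    coneOver x R (⋃ i, A i) = ⋃ i, coneOver x R (A i) := by
  simp only [coneOver, Set.prod_iUnion, Set.image_iUnion]

/-- The cone over a set of diameter at most `r` is covered by about `R * D / r` balls of radius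
comparable to `r` centred on a ray from the vertex. -/
theorem coneOver_subset_iUnion_closedBall {x a : E} {R D r : ℝ} {A : Set E} (hD : 0 < D)
    (hr : 0 < r) (ha : a ∈ Metric.closedBall x D) (hA : A ⊆ Metric.closedBall a r) :
    coneOver x R A ⊆ ⋃ k ∈ Finset.range (⌊R * D / r⌋₊ + 1),
      Metric.closedBall (x + (k * (r / D)) • (a - x)) ((R + 1) * r) := by
  rintro _ ⟨⟨t, y⟩, ⟨⟨ht0, htR⟩, hy⟩, rfl⟩
  simp only at ht0 htR hy
  have hR : 0 ≤ R := ht0.trans htR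
  have hy' : ‖y - a‖ ≤ r := mem_closedBall_iff_norm.1 (hA hy)
  have ha' : ‖a - x‖ ≤ D := mem_closedBall_iff_norm.1 ha
  have hk1 : (⌊t * D / r⌋₊ : ℝ) ≤ t * D / r := Nat.floor_le (by positivity)
  have hk2 : t * D / r < ⌊t * D / r⌋₊ + 1 := Nat.lt_floor_add_one _
  have hkR : ⌊t * D / r⌋₊ ≤ ⌊R * D / r⌋₊ := Nat.floor_le_floor (by gcongr)
  simp only [Set.mem_iUnion, Finset.mem_range]
  refine ⟨⌊t * D / r⌋₊, by omega, ?_⟩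
  generalize (⌊t * D / r⌋₊ : ℝ) = k at hk1 hk2
  rw [mem_closedBall_iff_norm]
  have hpos : 0 < r / D := by positivity
  have ht : t * D / r * (r / D) = t := by field_simp
  have h1 : k * (r / D) ≤ t := by
    simpa only [ht] using mul_le_mul_of_nonneg_right hk1 hpos.le
  have h2 : t - k * (r / D) ≤ r / D := by
    have := mul_le_mul_of_nonneg_right hk2.le hpos.le
    rw [ht] at this
    linarith
  have heq : x + t • (y - x) - (x + (k * (r / D)) • (a - x)) =
      t • (y - a) + (t - k * (r / D)) • (a - x) := by module
  calc ‖x + t • (y - x) - (x + (k * (r / D)) • (a - x))‖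
      ≤ t * ‖y - a‖ + (t - k * (r / D)) * ‖a - x‖ := by
        rw [heq]
        refine (norm_add_le _ _).trans_eq ?_
        rw [norm_smul, norm_smul, Real.norm_of_nonneg ht0, Real.norm_of_nonneg (by linarith)]
    _ ≤ R * r + (r / D) * D := by gcongr
    _ = (R + 1) * r := by field_simp

variable [FiniteDimensional ℝ E] [MeasurableSpace E] [BorelSpace E] (μ : Measure E)
  [μ.IsAddHaarMeasure]

theorem measure_coneOver_le_of_subset_closedBall {n : ℕ} (hn : Module.finrank ℝ E = n + 1)
    {x a : E} {R D r : ℝ} {A : Set E} (hR : 0 ≤ R) (hD : 0 < D) (hr : 0 < r) (hr1 : r ≤ 1)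
    (ha : a ∈ Metric.closedBall x D) (hA : A ⊆ Metric.closedBall a r) :
    μ (coneOver x R A) ≤
      ENNReal.ofReal ((R * D + 1) * (R + 1) ^ (n + 1)) * μ (Metric.ball 0 1) *
        ENNReal.ofReal r ^ n := by
  have hcount : ((⌊R * D / r⌋₊ + 1 : ℕ) : ℝ) ≤ (R * D + 1) / r := by
    push_cast
    rw [add_div]
    exact add_le_add (Nat.floor_le (by positivity)) ((one_le_div hr).2 hr1)
  calc μ (coneOver x R A)
      ≤ ∑ k ∈ Finset.range (⌊R * D / r⌋₊ + 1),
          μ (Metric.closedBall (x + (k * (r / D)) • (a - x)) ((R + 1) * r)) :=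
        (measure_mono (coneOver_subset_iUnion_closedBall hD hr ha hA)).trans
          (measure_biUnion_finset_le _ _)
    _ = ENNReal.ofReal (((⌊R * D / r⌋₊ + 1 : ℕ) : ℝ) * ((R + 1) * r) ^ (n + 1)) *
          μ (Metric.ball 0 1) := by
        simp only [Measure.addHaar_closedBall μ _ (show 0 ≤ (R + 1) * r by positivity), hn,
          Finset.sum_const, Finset.card_range, nsmul_eq_mul]
        rw [ENNReal.ofReal_mul (Nat.cast_nonneg _), ENNReal.ofReal_natCast, mul_assoc]
    _ ≤ ENNReal.ofReal ((R * D + 1) / r * ((R + 1) * r) ^ (n + 1)) * μ (Metric.ball 0 1) := by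
        gcongr
    _ = _ := by
        rw [← ENNReal.ofReal_pow hr.le, mul_right_comm, ← ENNReal.ofReal_mul (by positivity)]
        congr 2
        rw [mul_pow, pow_succ r]
        field_simp

/-- Cones in dimension `n + 1` have measure bounded by the `n`-dimensional Hausdorff measure of
their base. -/
theorem measure_coneOver_le_hausdorffMeasure {n : ℕ} (hn : Module.finrank ℝ E = n + 1)
    (x : E) {R D : ℝ} (hR : 0 ≤ R) (hD : 0 < D) {A : Set E} (hA : A ⊆ Metric.closedBall x D) :
    μ (coneOver x R A) ≤
      ENNReal.ofReal ((R * D + 1) * (R + 1) ^ (n + 1)) * μ (Metric.ball 0 1) * μH[n] A := by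
  set c := ENNReal.ofReal ((R * D + 1) * (R + 1) ^ (n + 1)) * μ (Metric.ball 0 1)
  have hc0 : c ≠ 0 := mul_ne_zero (ENNReal.ofReal_pos.2 (by positivity)).ne'
    (Metric.measure_ball_pos μ 0 one_pos).ne'
  have hc : c ≠ ⊤ := ENNReal.mul_ne_top ENNReal.ofReal_ne_top measure_ball_lt_top.ne
  let ν : OuterMeasure E :=
    { measureOf := fun B => μ (coneOver x R (B ∩ Metric.closedBall x D))
      empty := by simp [coneOver]
      mono := fun h => measure_mono (coneOver_mono x R (Set.inter_subset_inter_left _ h))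
      iUnion_nat := fun B _ => by
        rw [Set.iUnion_inter, coneOver_iUnion]
        exact measure_iUnion_le _ }
  have hν : ν ≤ OuterMeasure.mkMetric (c • fun r : ENNReal => r ^ (n : ℝ)) := by
    refine OuterMeasure.le_mkMetric _ ν 2⁻¹ (by simp) fun B hB => ?_
    change μ (coneOver x R (B ∩ Metric.closedBall x D)) ≤ c * Metric.ediam B ^ (n : ℝ)
    rw [ENNReal.rpow_natCast]
    obtain hB' | ⟨a, haB, ha⟩ := (B ∩ Metric.closedBall x D).eq_empty_or_nonempty
    · simp [hB', coneOver]
    have hfin : Metric.ediam B ≠ ⊤ := ne_top_of_le_ne_top (by simp) hB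
    have hdiam : Metric.diam B < 1 := by
      have := ENNReal.toReal_mono (by simp) hB
      rw [Metric.diam]
      norm_num at this
      linarith
    have hbound : ∀ r ∈ Set.Ioo (Metric.diam B) 1,
        μ (coneOver x R (B ∩ Metric.closedBall x D)) ≤ c * ENNReal.ofReal r ^ n := fun r hr =>
      measure_coneOver_le_of_subset_closedBall μ hn hR hD (Metric.diam_nonneg.trans_lt hr.1)
        hr.2.le ha fun y hy => (Metric.dist_le_diam_of_mem' hfin hy.1 haB).trans hr.1.le
    have hlim : Filter.Tendsto (fun r => c * ENNReal.ofReal r ^ n)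
        (nhdsWithin (Metric.diam B) (Set.Ioi (Metric.diam B)))
        (nhds (c * ENNReal.ofReal (Metric.diam B) ^ n)) :=
      ENNReal.Tendsto.const_mul (((ENNReal.continuous_pow n).comp
        ENNReal.continuous_ofReal).continuousWithinAt) (Or.inr hc)
    rw [Metric.diam, ENNReal.ofReal_toReal hfin] at hlim
    exact ge_of_tendsto hlim (Filter.mem_of_superset (Ioo_mem_nhdsGT hdiam) hbound)
  rw [OuterMeasure.mkMetric_smul _ hc hc0] at hν
  calc μ (coneOver x R A) = ν A := by
        change _ = μ (coneOver x R (A ∩ Metric.closedBall x D))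
        rw [Set.inter_eq_self_of_subset_left hA]
    _ ≤ c * OuterMeasure.mkMetric (fun r : ENNReal => r ^ (n : ℝ)) A := hν A
    _ = c * μH[n] A := by rw [OuterMeasure.coe_mkMetric, Measure.hausdorffMeasure]

end Cone

theorem shadow_subset_coneOver {E : Type*} [NormedAddCommGroup E] [NormedSpace ℝ E] {D δ : ℝ}
    (hδ : 0 < δ) {S : Set E} {x : E} (hx : δ ≤ Metric.infDist x S) :
    {z | z ∈ Metric.closedBall x D ∧ (segment ℝ x z ∩ S).Nonempty} ⊆
      coneOver x (D / δ) (S ∩ Metric.closedBall x D) := by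
  rintro z ⟨hz, y, hy, hyS⟩
  rw [segment_eq_image'] at hy
  obtain ⟨s, ⟨hs0, hs1⟩, rfl⟩ := hy
  rw [mem_closedBall_iff_norm] at hz
  have hdist : δ ≤ s * ‖z - x‖ := by
    have := hx.trans (Metric.infDist_le_dist_of_mem hyS)
    rwa [dist_self_add_right, norm_smul, Real.norm_of_nonneg hs0] at this
  have hs : 0 < s := hs0.lt_of_ne' fun h => by
    rw [h, zero_mul] at hdist
    exact hδ.not_ge hdist
  have hle : s * ‖z - x‖ ≤ ‖z - x‖ := mul_le_of_le_one_left (norm_nonneg _) hs1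
  refine ⟨(s⁻¹, x + s • (z - x)), ⟨⟨by positivity, ?_⟩, hyS, ?_⟩, ?_⟩
  · rw [le_div_iff₀ hδ, inv_mul_le_iff₀ hs]
    exact hdist.trans (by gcongr)
  · rw [mem_closedBall_iff_norm, add_sub_cancel_left, norm_smul, Real.norm_of_nonneg hs0]
    exact hle.trans hz
  · simp [smul_smul, hs.ne']

theorem volume_of_points_shadowed_by_small_surface
    (D δ : ℝ) (hD : 0 < D) (hδ : 0 < δ) :
    ∃ C : ℝ, 0 < C ∧
      ∀ (S : Set (EuclideanSpace ℝ (Fin 3))) (x : EuclideanSpace ℝ (Fin 3)),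
        δ ≤ Metric.infDist x S →
        volume {z : EuclideanSpace ℝ (Fin 3) |
            z ∈ Metric.closedBall x D ∧ (segment ℝ x z ∩ S).Nonempty} ≤
          ENNReal.ofReal C * μH[2] (S ∩ Metric.closedBall x D) := by
  set V := volume (Metric.ball (0 : EuclideanSpace ℝ (Fin 3)) 1)
  have hV : V ≠ ⊤ := measure_ball_lt_top.ne
  have hV0 : 0 < V.toReal := ENNReal.toReal_pos (Metric.measure_ball_pos _ _ one_pos).ne' hV
  refine ⟨(D / δ * D + 1) * (D / δ + 1) ^ (2 + 1) * V.toReal, by positivity, fun S x hx => ?_⟩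
  rw [ENNReal.ofReal_mul (by positivity), ENNReal.ofReal_toReal hV]
  refine (measure_mono (shadow_subset_coneOver hδ hx)).trans ?_
  exact_mod_cast measure_coneOver_le_hausdorffMeasure volume (n := 2) (by simp) x
    (by positivity : 0 ≤ D / δ) hD Set.inter_subset_right
end

section
/- Let X be a metric space and let 0 < L₀ and 4·L₀ ≤ L. Assume: (a) X is geodesic: for all x, y ∈ X there is γ : ℝ → X with γ(0) = x, γ(dist(x,y)) = y and dist(γ(s), γ(t)) = |s − t| for all s, t ∈ [0, dist(x,y)]; (b) X is non-branching: whenever l > 0 and γ₁, γ₂ : ℝ → X satisfy dist(γ_i(s), γ_i(t)) = |s − t| for all s, t ∈ [0, l] (i = 1, 2), γ₁(0) = γ₂(0), and there is ε > 0 with γ₁(t) = γ₂(t) for all t ∈ [0, ε], then γ₁(t) = γ₂(t) for all t ∈ [0, l]. Let f : X → ℝ³ satisfy ‖f(x)‖ ≤ L for all x, and let Q ⊆ X be such that every w ∈ ℝ³ with L₀ ≤ ‖w‖ ≤ L equals f(p) for some p ∈ Q, and dist(x, p) = ‖f(x) − f(p)‖ for every x ∈ X, p ∈ Q. Assume moreover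 that f is injective on the preimage of the open annulus: if L₀ < ‖f(x₁)‖ < 2·L₀ and f(x₁) = f(x₂) then x₁ = x₂. Then f is injective on {x : ‖f(x)‖ ≤ L/2}: if ‖f(y₁)‖ ≤ L/2, ‖f(y₂)‖ ≤ L/2 and f(y₁) = f(y₂), then y₁ = y₂. -/
/-- In a strictly convex space, the intermediate point of a segment is determined by its
distances to the two endpoints. -/
theorem eq_of_dist_endpoints_eq {E : Type*} [NormedAddCommGroup E] [NormedSpace ℝ E]
    [StrictConvexSpace ℝ E] {x z a b : E} {t : ℝ} (hxz : 0 < dist x z)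
    (hxa : dist x a = t) (haz : dist a z = dist x z - t)
    (hxb : dist x b = t) (hbz : dist b z = dist x z - t) : a = b := by
  have first : t = t / dist x z * dist x z := by field_simp
  have second : dist x z - t = (1 - t / dist x z) * dist x z := by field_simp
  rw [eq_lineMap_of_dist_eq_mul_of_dist_eq_mul (hxa.trans first) (haz.trans second),
    eq_lineMap_of_dist_eq_mul_of_dist_eq_mul (hxb.trans first) (hbz.trans second)]

theorem injectivity_from_annulus_and_nonbranching
    {X : Type*} [MetricSpace X] (L₀ L : ℝ) (hL₀ : 0 < L₀) (hL : 4 * L₀ ≤ L)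
    (hgeo : ∀ x y : X, ∃ γ : ℝ → X, γ 0 = x ∧ γ (dist x y) = y ∧
      ∀ s ∈ Set.Icc 0 (dist x y), ∀ t ∈ Set.Icc 0 (dist x y),
        dist (γ s) (γ t) = |s - t|)
    (hnb : ∀ l : ℝ, 0 < l → ∀ γ₁ γ₂ : ℝ → X,
      (∀ s ∈ Set.Icc (0 : ℝ) l, ∀ t ∈ Set.Icc (0 : ℝ) l, dist (γ₁ s) (γ₁ t) = |s - t|) →
      (∀ s ∈ Set.Icc (0 : ℝ) l, ∀ t ∈ Set.Icc (0 : ℝ) l, dist (γ₂ s) (γ₂ t) = |s - t|) →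
      γ₁ 0 = γ₂ 0 →
      (∃ ε > 0, ∀ t ∈ Set.Icc (0 : ℝ) ε, γ₁ t = γ₂ t) →
      ∀ t ∈ Set.Icc (0 : ℝ) l, γ₁ t = γ₂ t)
    (f : X → EuclideanSpace ℝ (Fin 3)) (hfbd : ∀ x, ‖f x‖ ≤ L)
    (Q : Set X)
    (hsurj : ∀ w : EuclideanSpace ℝ (Fin 3), L₀ ≤ ‖w‖ → ‖w‖ ≤ L → ∃ p ∈ Q, f p = w)
    (hdist : ∀ x : X, ∀ p ∈ Q, dist x p = ‖f x - f p‖)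
    (hinj : ∀ x₁ x₂ : X, L₀ < ‖f x₁‖ → ‖f x₁‖ < 2 * L₀ → f x₁ = f x₂ → x₁ = x₂) :
    ∀ y₁ y₂ : X, ‖f y₁‖ ≤ L / 2 → ‖f y₂‖ ≤ L / 2 → f y₁ = f y₂ → y₁ = y₂ := by
  have eq_of_mem_Q : ∀ x, ∀ p ∈ Q, f x = f p → x = p := by
    intro x p hp hxp
    exact dist_eq_zero.mp (by rw [hdist x p hp, hxp, sub_self, norm_zero])
  have mem_Q : ∀ x, L₀ ≤ ‖f x‖ → x ∈ Q := by
    intro x hx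
    obtain ⟨p, hp, hpx⟩ := hsurj (f x) hx (hfbd x)
    rwa [eq_of_mem_Q x p hp hpx.symm]
  intro y₁ y₂ _ _ hy
  rcases le_or_gt L₀ ‖f y₂‖ with hlarge | hsmall
  · exact eq_of_mem_Q y₁ y₂ (mem_Q y₂ hlarge) hy
  obtain ⟨w, hw⟩ := exists_norm_eq (EuclideanSpace ℝ (Fin 3))
    (show (0 : ℝ) ≤ 3 / 2 * L₀ by positivity)
  obtain ⟨q, hq, hqw⟩ := hsurj w (by linarith) (by linarith)
  have hqnorm : ‖f q‖ = 3 / 2 * L₀ := by rw [hqw, hw]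
  have dist_q : ∀ x, dist q x = dist (f q) (f x) := by
    intro x
    rw [dist_comm, hdist x q hq, dist_eq_norm, norm_sub_rev]
  have hfar : L₀ / 4 < dist q y₂ := by
    rw [dist_q, dist_eq_norm]
    linarith [norm_sub_norm_le (f q) (f y₂)]
  have hd : dist q y₁ = dist q y₂ := by rw [dist_q, dist_q, hy]
  have geodesic_image : ∀ y, f y = f y₂ → ∀ γ : ℝ → X, γ 0 = q → γ (dist q y₂) = y →
      (∀ s ∈ Set.Icc 0 (dist q y₂), ∀ t ∈ Set.Icc 0 (dist q y₂),
        dist (γ s) (γ t) = |s - t|) →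
      ∀ t ∈ Set.Icc 0 (L₀ / 4), γ t ∈ Q ∧ dist (f q) (f (γ t)) = t ∧
        dist (f (γ t)) (f y₂) = dist (f q) (f y₂) - t := by
    intro y hfy γ hγ₀ hγ₁ hγ t ht
    have htd : t ∈ Set.Icc 0 (dist q y₂) := ⟨ht.1, by linarith [ht.2]⟩
    have hstart : dist q (γ t) = t := by
      rw [← hγ₀, hγ 0 ⟨le_rfl, dist_nonneg⟩ t htd, zero_sub, abs_neg, abs_of_nonneg ht.1]
    have hend : dist y (γ t) = dist q y₂ - t := by
      rw [← hγ₁, hγ _ ⟨dist_nonneg, le_rfl⟩ t htd, abs_of_nonneg (by linarith [htd.2])]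
    rw [dist_q] at hstart
    have hmem : γ t ∈ Q := by
      apply mem_Q
      have htri := norm_sub_norm_le (f q) (f (γ t))
      rw [← dist_eq_norm, hstart] at htri
      linarith [ht.2]
    refine ⟨hmem, hstart, ?_⟩
    rw [← dist_q, ← hend, hdist y (γ t) hmem, hfy, dist_comm, dist_eq_norm]
  obtain ⟨γ₁, hγ₁₀, hγ₁₁, hγ₁⟩ := hgeo q y₁
  obtain ⟨γ₂, hγ₂₀, hγ₂₁, hγ₂⟩ := hgeo q y₂
  rw [hd] at hγ₁₁ hγ₁
  have hpos : 0 < dist q y₂ := by linarith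
  refine hγ₁₁.symm.trans (Eq.trans ?_ hγ₂₁)
  refine hnb _ hpos γ₁ γ₂ hγ₁ hγ₂ (hγ₁₀.trans hγ₂₀.symm) ⟨L₀ / 4, by positivity, ?_⟩ _
    ⟨dist_nonneg, le_rfl⟩
  intro t ht
  obtain ⟨_, hs₁, he₁⟩ := geodesic_image y₁ hy γ₁ hγ₁₀ hγ₁₁ hγ₁ t ht
  obtain ⟨hmem, hs₂, he₂⟩ := geodesic_image y₂ rfl γ₂ hγ₂₀ hγ₂₁ hγ₂ t ht
  exact eq_of_mem_Q _ _ hmem (eq_of_dist_endpoints_eq (dist_q y₂ ▸ hpos) hs₁ he₁ hs₂ he₂)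
end
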